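/- arXiv:2308.07594 — 2 statements merged into one kernel-verified Lean document; each statement's English description precedes it below -/
import Mathlib

section
/- For every binary string b there exist at most three finite continued fraction strings v with E(v) = b; that is, at most three continued fraction cylinders are mapped to a given dyadic interval under the encoding E. -/
open MeasureTheory Filter

/-- The Gauss map `T x = 1/x - ⌊1/x⌋`. -/
noncomputable def gaussMap (x : ℝ) : ℝ := 1 / x - ⌊1 / x⌋

/-- The `i`-th continued fraction digit (0-indexed): `a_{i+1}(x) = ⌊1/T^i(x)⌋`. -/
noncomputable def cfDigit (x : ℝ) (i : ℕ) : ℕ := (⌊1 / (gaussMap^[i] x)⌋).toNat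

/-- The continued fraction cylinder of a finite string of positive integers. -/
def cfCylinder (v : List ℕ+) : Set ℝ :=
  {x | x ∈ Set.Ioo (0 : ℝ) 1 ∧ Irrational x ∧
    ∀ (i : ℕ) (hi : i < v.length), cfDigit x i = (v.get ⟨i, hi⟩ : ℕ)}

/-- The Gauss measure of a set: `γ(A) = (1/ln 2) ∫_A 1/(1+x) dx`. -/
noncomputable def gaussSet (A : Set ℝ) : ℝ := (1 / Real.log 2) * ∫ x in A, 1 / (1 + x)

/-- A continued fraction `s`-gale. -/
def IsCFGale (s : ℝ) (d : List ℕ+ → ℝ) : Prop :=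
  (∀ w, 0 ≤ d w) ∧
  ∀ w : List ℕ+,
    d w * gaussSet (cfCylinder w) ^ s =
      ∑' i : ℕ+, d (w ++ [i]) * gaussSet (cfCylinder (w ++ [i])) ^ s

/-- A binary `s`-gale. -/
def IsBinGale (s : ℝ) (h : List Bool → ℝ) : Prop :=
  (∀ w, 0 ≤ h w) ∧
  ∀ w : List Bool, h (w ++ [false]) + h (w ++ [true]) = (2 : ℝ) ^ s * h w

/-- The real number `0.w` for a finite binary string `w`. -/
noncomputable def binVal (w : List Bool) : ℝ :=
  ∑ i ∈ Finset.range w.length, (if w.getD i false then ((2 : ℝ)⁻¹) ^ (i + 1) else 0)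

/-- The dyadic cylinder `[0.w, 0.w + 2^{-|w|})`. -/
noncomputable def binCylinder (w : List Bool) : Set ℝ :=
  Set.Ico (binVal w) (binVal w + ((2 : ℝ)⁻¹) ^ w.length)

/-- The prefix of length `n` of the continued fraction expansion of `x`. -/
noncomputable def cfPrefix (x : ℝ) (n : ℕ) : List ℕ+ :=
  (List.range n).map fun i => (cfDigit x i).toPNat'

/-- The prefix of length `n` of the binary expansion of `x`. -/
noncomputable def binPrefix (x : ℝ) (n : ℕ) : List Bool :=
  (List.range n).map fun i => decide (⌊x * 2 ^ (i + 1)⌋ % 2 = 1)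

/-- The value of a finite continued fraction. -/
noncomputable def cfVal : List ℕ+ → ℝ
  | [] => 0
  | a :: w => 1 / (((a : ℕ) : ℝ) + cfVal w)

/-- `b` is the leftmost maximal dyadic interval enclosed by the closure of `C_v`. -/
def IsEncoding (v : List ℕ+) (b : List Bool) : Prop :=
  binCylinder b ⊆ closure (cfCylinder v) ∧
  (∀ b' : List Bool, binCylinder b' ⊆ closure (cfCylinder v) → b.length ≤ b'.length) ∧
  (∀ b' : List Bool, b'.length = b.length →
    binCylinder b' ⊆ closure (cfCylinder v) → binVal b ≤ binVal b')

/-!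
If `E v = E w = b`, an irrational point of the dyadic interval of `b` lies in both cylinders, so one
of the two strings is a prefix of the other. With `k` the length of `b`, both cylinders have
diameter at least `2⁻ᵏ` since they enclose that interval, and less than `4 · 2⁻ᵏ` since any interval
of length `2 · 2⁻⁽ᵏ⁻¹⁾` in the unit interval encloses a dyadic interval of order `k - 1`. Appending
a digit at least halves the diameter of a cylinder, so the lengths of `v` and `w` differ by at most
one; as strings of equal length coincide, there are at most two.
-/

/-- The inverse branch of the iterated Gauss map along `v`, sending `y` to the continued fraction
`1 / (a₁ + 1 / (a₂ + ⋯ + 1 / (aₙ + y)))`; the cylinder of `v` is the image of the irrationals of the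
unit interval. -/
noncomputable def cfBranch : List ℕ+ → ℝ → ℝ
  | [], y => y
  | a :: w, y => 1 / (((a : ℕ) : ℝ) + cfBranch w y)

lemma one_le_pnat_cast (a : ℕ+) : (1 : ℝ) ≤ (a : ℕ) :=
  Nat.one_le_cast.2 a.pos

lemma cfBranch_append (v u : List ℕ+) (y : ℝ) :
    cfBranch (v ++ u) y = cfBranch v (cfBranch u y) := by
  induction v with
  | nil => rfl
  | cons a w ih => rw [List.cons_append, cfBranch, cfBranch, ih]

lemma cfBranch_nonneg (v : List ℕ+) {y : ℝ} (hy : 0 ≤ y) : 0 ≤ cfBranch v y := by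
  induction v with
  | nil => exact hy
  | cons a w ih =>
    rw [cfBranch]
    positivity

lemma cfBranch_le_one (v : List ℕ+) {y : ℝ} (hy : y ∈ Set.Icc 0 1) : cfBranch v y ≤ 1 := by
  cases v with
  | nil => exact hy.2
  | cons a w =>
    have hw := cfBranch_nonneg w hy.1
    rw [cfBranch]
    exact div_le_one_of_le₀ (by linarith [one_le_pnat_cast a]) (by positivity)

lemma continuousOn_cfBranch (v : List ℕ+) : ContinuousOn (cfBranch v) (Set.Ici 0) := by
  induction v with
  | nil => exact continuousOn_id
  | cons a w ih =>
    refine continuousOn_const.div (continuousOn_const.add ih) fun y hy => ?_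
    have hw := cfBranch_nonneg w hy
    positivity

lemma monotoneOn_or_antitoneOn_cfBranch (v : List ℕ+) :
    MonotoneOn (cfBranch v) (Set.Ici 0) ∨ AntitoneOn (cfBranch v) (Set.Ici 0) := by
  have one_div_add_le (a : ℕ+) {s t : ℝ} (hs : 0 ≤ s) (hst : s ≤ t) :
      1 / (((a : ℕ) : ℝ) + t) ≤ 1 / (((a : ℕ) : ℝ) + s) :=
    one_div_le_one_div_of_le (by positivity) (by gcongr)
  induction v with
  | nil => exact Or.inl (monotone_id.monotoneOn _)
  | cons a w ih =>
    rcases ih with hmono | hanti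
    · exact Or.inr fun x hx y hy hxy =>
        one_div_add_le a (cfBranch_nonneg w hx) (hmono hx hy hxy)
    · exact Or.inl fun x hx y hy hxy =>
        one_div_add_le a (cfBranch_nonneg w hy) (hanti hx hy hxy)

lemma image_cfBranch_Icc (v : List ℕ+) :
    cfBranch v '' Set.Icc 0 1 = Set.uIcc (cfBranch v 0) (cfBranch v 1) := by
  have hsub : Set.uIcc (0 : ℝ) 1 ⊆ Set.Ici 0 := by
    rw [Set.uIcc_of_le zero_le_one]
    exact Set.Icc_subset_Ici_self
  have hcont := (continuousOn_cfBranch v).mono hsub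
  rw [← Set.uIcc_of_le (zero_le_one' ℝ)]
  rcases monotoneOn_or_antitoneOn_cfBranch v with hmono | hanti
  · exact hcont.image_uIcc_of_monotoneOn (hmono.mono hsub)
  · exact hcont.image_uIcc_of_antitoneOn (hanti.mono hsub)

lemma irrational_cfBranch_iff (v : List ℕ+) (y : ℝ) :
    Irrational (cfBranch v y) ↔ Irrational y := by
  induction v with
  | nil => rfl
  | cons a w ih => rw [cfBranch, one_div, irrational_inv_iff, irrational_natCast_add_iff, ih]

-- `p / q` and `p' / q'` are the last two convergents of `v` (`0 / 1` and `1 / 0` if `v` is empty).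
lemma exists_cfBranch_eq_div (v : List ℕ+) :
    ∃ p p' q q' : ℝ, 0 ≤ p ∧ 0 ≤ p' ∧ 0 < q ∧ 0 ≤ q' ∧ |p' * q - p * q'| = 1 ∧
      ∀ y, 0 ≤ y → cfBranch v y = (p + p' * y) / (q + q' * y) := by
  induction v with
  | nil => exact ⟨0, 1, 1, 0, by simp [cfBranch]⟩
  | cons a w ih =>
    obtain ⟨p, p', q, q', hp, hp', hq, hq', hdet, hw⟩ := ih
    refine ⟨q, q', a * q + p, a * q' + p', hq.le, hq', by positivity, by positivity, ?_, ?_⟩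
    · rw [← hdet, ← abs_neg]
      ring_nf
    · intro y hy
      have hden : 0 < q + q' * y := by positivity
      rw [cfBranch, hw y hy, add_div' _ _ _ hden.ne', one_div_div]
      ring_nf

lemma exists_abs_cfBranch_sub_eq (v : List ℕ+) :
    ∃ q q' : ℝ, 0 < q ∧ 0 ≤ q' ∧ ∀ y z, 0 ≤ y → 0 ≤ z →
      |cfBranch v y - cfBranch v z| = |y - z| / ((q + q' * y) * (q + q' * z)) := by
  obtain ⟨p, p', q, q', -, -, hq, hq', hdet, hv⟩ := exists_cfBranch_eq_div v
  refine ⟨q, q', hq, hq', fun y z hy hz => ?_⟩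
  have hy' : 0 < q + q' * y := by positivity
  have hz' : 0 < q + q' * z := by positivity
  calc |cfBranch v y - cfBranch v z|
      = |(p' * q - p * q') * (y - z) / ((q + q' * y) * (q + q' * z))| := by
        rw [hv y hy, hv z hz, div_sub_div _ _ hy'.ne' hz'.ne']
        ring_nf
    _ = |y - z| / ((q + q' * y) * (q + q' * z)) := by
        rw [abs_div, abs_mul, hdet, one_mul, abs_of_pos (mul_pos hy' hz')]

lemma abs_cfBranch_concat_sub_le (v : List ℕ+) (a : ℕ+) :
    |cfBranch (v ++ [a]) 1 - cfBranch (v ++ [a]) 0| ≤ |cfBranch v 1 - cfBranch v 0| / 2 := by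
  obtain ⟨q, q', hq, hq', hv⟩ := exists_abs_cfBranch_sub_eq v
  have ha := one_le_pnat_cast a
  have hqa : q ≤ a * q := le_mul_of_one_le_left hq.le ha
  have hdist : |1 / ((a : ℕ) + 1 : ℝ) - 1 / (a : ℕ)| = 1 / ((a : ℕ) * ((a : ℕ) + 1)) := by
    rw [abs_sub_comm, abs_of_nonneg (sub_nonneg.2 (by gcongr; linarith))]
    field_simp
    ring
  calc |cfBranch (v ++ [a]) 1 - cfBranch (v ++ [a]) 0|
      = |cfBranch v (1 / ((a : ℕ) + 1)) - cfBranch v (1 / (a : ℕ))| := by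
        simp only [cfBranch_append, cfBranch, add_zero]
    _ = 1 / (((a + 1) * q + q') * (a * q + q')) := by
        rw [hv _ _ (by positivity) (by positivity), hdist]
        field_simp
    _ ≤ 1 / ((2 * q) * (q + q')) := by
        gcongr
        · linarith
    _ = |cfBranch v 1 - cfBranch v 0| / 2 := by
        rw [hv _ _ zero_le_one le_rfl, sub_zero, abs_one, mul_one, mul_zero, add_zero]
        field_simp

lemma irrational_gaussMap_iff {x : ℝ} : Irrational (gaussMap x) ↔ Irrational x := by
  rw [gaussMap, irrational_sub_intCast_iff, one_div, irrational_inv_iff]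

lemma gaussMap_mem_Ioo {x : ℝ} (hx : Irrational x) : gaussMap x ∈ Set.Ioo 0 1 :=
  ⟨(Int.fract_nonneg _).lt_of_ne' (irrational_gaussMap_iff.2 hx).ne_zero, Int.fract_lt_one _⟩

lemma cfDigit_succ (x : ℝ) (i : ℕ) : cfDigit x (i + 1) = cfDigit (gaussMap x) i := by
  rw [cfDigit, cfDigit, Function.iterate_succ_apply]

lemma cfDigit_zero_eq_iff {x : ℝ} {a : ℕ+} : cfDigit x 0 = a ↔ ⌊1 / x⌋ = (a : ℕ) := by
  have ha := a.pos
  rw [cfDigit, Function.iterate_zero, id]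
  omega

lemma mem_cfCylinder_cons {a : ℕ+} {w : List ℕ+} {x : ℝ} :
    x ∈ cfCylinder (a :: w) ↔ ⌊1 / x⌋ = (a : ℕ) ∧ gaussMap x ∈ cfCylinder w := by
  constructor
  · rintro ⟨-, hirr, hdigit⟩
    refine ⟨cfDigit_zero_eq_iff.1 (hdigit 0 (Nat.succ_pos _)), gaussMap_mem_Ioo hirr,
      irrational_gaussMap_iff.2 hirr, fun i hi => ?_⟩
    exact cfDigit_succ x i ▸ hdigit (i + 1) (Nat.succ_lt_succ hi)
  · rintro ⟨hfloor, -, hirr, hdigit⟩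
    rw [irrational_gaussMap_iff] at hirr
    have hinv : 1 ≤ x⁻¹ := by
      calc (1 : ℝ) ≤ ((⌊1 / x⌋ : ℤ) : ℝ) := by
            rw [hfloor, Int.cast_natCast]
            exact one_le_pnat_cast a
        _ ≤ x⁻¹ := by rw [one_div]; exact Int.floor_le _
    obtain ⟨hpos, hle⟩ := one_le_inv_iff₀.1 hinv
    refine ⟨⟨hpos, hle.lt_of_ne hirr.ne_one⟩, hirr, ?_⟩
    rintro (_ | i) hi
    · exact cfDigit_zero_eq_iff.2 hfloor
    · exact (cfDigit_succ x i).trans (hdigit i (Nat.lt_of_succ_lt_succ hi))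

lemma cfCylinder_cons (a : ℕ+) (w : List ℕ+) :
    cfCylinder (a :: w) = (fun z => 1 / (((a : ℕ) : ℝ) + z)) '' cfCylinder w := by
  ext x
  rw [mem_cfCylinder_cons]
  constructor
  · rintro ⟨hfloor, hmem⟩
    refine ⟨gaussMap x, hmem, ?_⟩
    simp only [gaussMap, hfloor, Int.cast_natCast, add_sub_cancel, one_div_one_div]
  · rintro ⟨z, hz, rfl⟩
    have hfloor : ⌊1 / (1 / (((a : ℕ) : ℝ) + z))⌋ = (a : ℕ) := by
      rw [one_div_one_div, Int.floor_natCast_add, Int.floor_eq_zero_iff.2 ⟨hz.1.1.le, hz.1.2⟩,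
        add_zero]
    refine ⟨hfloor, ?_⟩
    rwa [gaussMap, hfloor, one_div_one_div, Int.cast_natCast, add_sub_cancel_left]

lemma cfCylinder_eq_image (v : List ℕ+) :
    cfCylinder v = cfBranch v '' (Set.Ioo 0 1 ∩ {y | Irrational y}) := by
  induction v with
  | nil =>
    ext x
    simp [cfCylinder, cfBranch]
  | cons a w ih =>
    rw [cfCylinder_cons, ih, Set.image_image]
    rfl

lemma closure_Ioo_inter_of_dense {α : Type*} [TopologicalSpace α] [LinearOrder α]
    [OrderTopology α] [DenselyOrdered α] {s : Set α} (hs : Dense s) {l r : α} (hlr : l ≠ r) :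
    closure (Set.Ioo l r ∩ s) = Set.Icc l r := by
  rw [← closure_Ioo hlr]
  exact (closure_mono Set.inter_subset_left).antisymm <|
    closure_minimal (hs.open_subset_closure_inter isOpen_Ioo) isClosed_closure

lemma closure_cfCylinder_eq_image (v : List ℕ+) :
    closure (cfCylinder v) = cfBranch v '' Set.Icc 0 1 := by
  have hcl := closure_Ioo_inter_of_dense dense_irrational (zero_ne_one' ℝ)
  have hcont : ContinuousOn (cfBranch v) (Set.Icc 0 1) :=
    (continuousOn_cfBranch v).mono Set.Icc_subset_Ici_self
  rw [cfCylinder_eq_image, ← hcl, image_closure_of_isCompact]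
  · exact hcl ▸ isCompact_Icc
  · exact hcl ▸ hcont

lemma closure_cfCylinder (v : List ℕ+) :
    closure (cfCylinder v) = Set.uIcc (cfBranch v 0) (cfBranch v 1) := by
  rw [closure_cfCylinder_eq_image, image_cfBranch_Icc]

lemma closure_cfCylinder_subset (v : List ℕ+) : closure (cfCylinder v) ⊆ Set.Icc 0 1 := by
  rw [closure_cfCylinder_eq_image]
  rintro _ ⟨y, hy, rfl⟩
  exact ⟨cfBranch_nonneg v hy.1, cfBranch_le_one v hy⟩

lemma diam_cfCylinder (v : List ℕ+) :
    Metric.diam (cfCylinder v) = |cfBranch v 1 - cfBranch v 0| := by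
  rw [← Metric.diam_closure, closure_cfCylinder, Set.uIcc, Real.diam_Icc min_le_max,
    max_sub_min_eq_abs]

lemma diam_cfCylinder_le_one (v : List ℕ+) : Metric.diam (cfCylinder v) ≤ 1 :=
  calc Metric.diam (cfCylinder v) = Metric.diam (closure (cfCylinder v)) :=
        (Metric.diam_closure _).symm
    _ ≤ Metric.diam (Set.Icc (0 : ℝ) 1) :=
        Metric.diam_mono (closure_cfCylinder_subset v) (Metric.isBounded_Icc 0 1)
    _ = 1 := by rw [Real.diam_Icc zero_le_one, sub_zero]

lemma diam_cfCylinder_append_le (v u : List ℕ+) :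
    Metric.diam (cfCylinder (v ++ u)) ≤ Metric.diam (cfCylinder v) / 2 ^ u.length := by
  induction u generalizing v with
  | nil => simp
  | cons a u ih =>
    calc Metric.diam (cfCylinder (v ++ a :: u))
        = Metric.diam (cfCylinder (v ++ [a] ++ u)) := by rw [List.append_cons]
      _ ≤ Metric.diam (cfCylinder (v ++ [a])) / 2 ^ u.length := ih _
      _ ≤ Metric.diam (cfCylinder v) / 2 / 2 ^ u.length := by
          rw [diam_cfCylinder, diam_cfCylinder]
          gcongr
          exact abs_cfBranch_concat_sub_le v a
      _ = Metric.diam (cfCylinder v) / 2 ^ (a :: u).length := by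
          rw [div_div, List.length_cons, pow_succ']

lemma mem_cfCylinder_of_mem_closure {v : List ℕ+} {x : ℝ} (hx : Irrational x)
    (hxv : x ∈ closure (cfCylinder v)) : x ∈ cfCylinder v := by
  rw [closure_cfCylinder_eq_image] at hxv
  obtain ⟨y, hy, rfl⟩ := hxv
  rw [irrational_cfBranch_iff] at hx
  rw [cfCylinder_eq_image]
  exact ⟨y, ⟨⟨hy.1.lt_of_ne' hx.ne_zero, hy.2.lt_of_ne hx.ne_one⟩, hx⟩, rfl⟩

lemma isPrefix_of_mem_cfCylinder {v w : List ℕ+} {x : ℝ} (hv : x ∈ cfCylinder v)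
    (hw : x ∈ cfCylinder w) (hlen : v.length ≤ w.length) : v <+: w := by
  refine List.prefix_iff_getElem.2 ⟨hlen, fun i hi => PNat.coe_injective ?_⟩
  exact (hv.2.2 i hi).symm.trans (hw.2.2 i (hi.trans_le hlen))

lemma binVal_cons (c : Bool) (w : List Bool) :
    binVal (c :: w) = (if c then 1 / 2 else 0) + binVal w / 2 := by
  rw [binVal, List.length_cons, Finset.sum_range_succ', add_comm, binVal, Finset.sum_div]
  refine congrArg₂ _ ?_ (Finset.sum_congr rfl fun i _ => ?_)
  · simp
  · rw [List.getD_cons_succ, pow_succ, ite_div, zero_div, div_eq_mul_inv]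

lemma mem_binCylinder_cons {c : Bool} {w : List Bool} {x : ℝ} :
    x ∈ binCylinder (c :: w) ↔ 2 * x - (if c then 1 else 0) ∈ binCylinder w := by
  rw [binCylinder, binCylinder, binVal_cons, List.length_cons, pow_succ, Set.mem_Ico, Set.mem_Ico]
  constructor <;> rintro ⟨hle, hlt⟩ <;> constructor <;> split_ifs at * <;> linarith

lemma exists_mem_binCylinder (m : ℕ) {x : ℝ} (hx : x ∈ Set.Ico 0 1) :
    ∃ w : List Bool, w.length = m ∧ x ∈ binCylinder w := by
  induction m generalizing x with
  | zero => exact ⟨[], rfl, by simpa [binCylinder, binVal] using hx⟩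
  | succ m ih =>
    let c : Bool := decide (1 / 2 ≤ x)
    have hdouble : 2 * x - (if c then 1 else 0) ∈ Set.Ico (0 : ℝ) 1 := by
      simp only [c, decide_eq_true_eq]
      constructor <;> split_ifs <;> linarith [hx.1, hx.2]
    obtain ⟨w, hlen, hmem⟩ := ih hdouble
    exact ⟨c :: w, by rw [List.length_cons, hlen], mem_binCylinder_cons.2 hmem⟩

lemma exists_binCylinder_subset_Icc {l r : ℝ} (hl : 0 ≤ l) (hr : r ≤ 1) (m : ℕ)
    (hlr : 2 * (2 : ℝ)⁻¹ ^ m ≤ r - l) :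
    ∃ w : List Bool, w.length = m ∧ binCylinder w ⊆ Set.Icc l r := by
  -- Any dyadic interval of order `m` through a point at distance `2⁻ᵐ` from both ends will do.
  have hpos : (0 : ℝ) < 2⁻¹ ^ m := by positivity
  obtain ⟨w, rfl, hlw, hwr⟩ := exists_mem_binCylinder m (x := l + 2⁻¹ ^ m)
    ⟨by positivity, by linarith⟩
  exact ⟨w, rfl, fun x hx => ⟨by linarith [hx.1], by linarith [hx.2]⟩⟩

lemma exists_binCylinder_subset_closure_cfCylinder {v : List ℕ+} {m : ℕ}
    (hv : 2 * 2⁻¹ ^ m ≤ Metric.diam (cfCylinder v)) :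
    ∃ w : List Bool, w.length = m ∧ binCylinder w ⊆ closure (cfCylinder v) := by
  have hunit := closure_cfCylinder_subset v
  rw [closure_cfCylinder, Set.uIcc, Set.Icc_subset_Icc_iff min_le_max] at hunit
  rw [closure_cfCylinder]
  apply exists_binCylinder_subset_Icc hunit.1 hunit.2 m
  rwa [max_sub_min_eq_abs, ← diam_cfCylinder]

lemma diam_binCylinder (w : List Bool) : Metric.diam (binCylinder w) = 2⁻¹ ^ w.length := by
  rw [binCylinder, Real.diam_Ico (le_add_of_nonneg_right (by positivity)), add_sub_cancel_left]

lemma exists_irrational_mem_binCylinder (w : List Bool) : ∃ x ∈ binCylinder w, Irrational x := by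
  obtain ⟨x, hx, hlt, hgt⟩ := exists_irrational_btwn
    (lt_add_of_pos_right (binVal w) (by positivity : (0 : ℝ) < 2⁻¹ ^ w.length))
  exact ⟨x, ⟨hlt.le, hgt⟩, hx⟩

namespace IsEncoding

variable {v w : List ℕ+} {b : List Bool}

lemma le_diam_cfCylinder (h : IsEncoding v b) : 2⁻¹ ^ b.length ≤ Metric.diam (cfCylinder v) := by
  rw [← diam_binCylinder, ← Metric.diam_closure (cfCylinder v)]
  exact Metric.diam_mono h.1 ((Metric.isBounded_Icc 0 1).subset (closure_cfCylinder_subset v))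

lemma diam_cfCylinder_lt (h : IsEncoding v b) :
    Metric.diam (cfCylinder v) < 4 * 2⁻¹ ^ b.length := by
  by_contra! hge
  rcases hm : b.length with _ | m
  · rw [hm] at hge
    linarith [diam_cfCylinder_le_one v]
  · obtain ⟨b', rfl, hsub⟩ : ∃ b' : List Bool, b'.length = m ∧
        binCylinder b' ⊆ closure (cfCylinder v) := by
      refine exists_binCylinder_subset_closure_cfCylinder (le_of_eq_of_le ?_ hge)
      rw [hm, pow_succ]
      ring
    have hle := h.2.1 b' hsub
    omega

lemma isPrefix (hv : IsEncoding v b) (hw : IsEncoding w b) (hlen : v.length ≤ w.length) :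
    v <+: w := by
  obtain ⟨x, hxb, hx⟩ := exists_irrational_mem_binCylinder b
  exact isPrefix_of_mem_cfCylinder (mem_cfCylinder_of_mem_closure hx (hv.1 hxb))
    (mem_cfCylinder_of_mem_closure hx (hw.1 hxb)) hlen

lemma eq_of_length_eq (hv : IsEncoding v b) (hw : IsEncoding w b) (hlen : v.length = w.length) :
    v = w :=
  (hv.isPrefix hw hlen.le).eq_of_length hlen

lemma length_le_succ (hv : IsEncoding v b) (hw : IsEncoding w b) : w.length ≤ v.length + 1 := by
  rcases le_total w.length v.length with hle | hle
  · exact hle.trans (Nat.le_succ _)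
  obtain ⟨u, rfl⟩ := hv.isPrefix hw hle
  have hlt : 2⁻¹ ^ b.length < 4 * 2⁻¹ ^ b.length / (2 : ℝ) ^ u.length :=
    calc (2 : ℝ)⁻¹ ^ b.length ≤ Metric.diam (cfCylinder (v ++ u)) := hw.le_diam_cfCylinder
      _ ≤ Metric.diam (cfCylinder v) / 2 ^ u.length := diam_cfCylinder_append_le v u
      _ < 4 * 2⁻¹ ^ b.length / 2 ^ u.length := by gcongr; exact hv.diam_cfCylinder_lt
  have hpow : (2 : ℝ) ^ u.length < 2 ^ 2 := by
    rw [lt_div_iff₀' (by positivity), mul_lt_mul_iff_left₀ (by positivity)] at hlt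
    linarith
  have hu : u.length < 2 := (pow_lt_pow_iff_right₀ one_lt_two).1 hpow
  rw [List.length_append]
  omega

end IsEncoding

theorem stmt5_general (b : List Bool) :
    ∃ v₁ v₂ : List ℕ+, ∀ v : List ℕ+, IsEncoding v b → v = v₁ ∨ v = v₂ := by
  by_cases hne : ∃ v, IsEncoding v b
  swap
  · exact ⟨[], [], fun v hv => (hne ⟨v, hv⟩).elim⟩
  obtain ⟨v₁, hv₁, hmin⟩ := exists_minimalFor_of_wellFoundedLT (IsEncoding · b) List.length hne
  have hlength {v} (hv : IsEncoding v b) (hne₁ : v ≠ v₁) : v.length = v₁.length + 1 := by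
    have hle := hv₁.length_le_succ hv
    have hlen_ne : v.length ≠ v₁.length := fun heq => hne₁ (hv.eq_of_length_eq hv₁ heq)
    have hge : v₁.length ≤ v.length := (le_total v.length v₁.length).elim (hmin hv) id
    omega
  by_cases hsecond : ∃ v₂, IsEncoding v₂ b ∧ v₂ ≠ v₁
  · obtain ⟨v₂, hv₂, hne₂⟩ := hsecond
    refine ⟨v₁, v₂, fun v hv => or_iff_not_imp_left.2 fun hne₁ => ?_⟩
    exact hv.eq_of_length_eq hv₂ ((hlength hv hne₁).trans (hlength hv₂ hne₂).symm)
  · push Not at hsecond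
    exact ⟨v₁, v₁, fun v hv => Or.inl (hsecond v hv)⟩

theorem stmt5 (b : List Bool) :
    ∃ v₁ v₂ v₃ : List ℕ+, ∀ v : List ℕ+, IsEncoding v b → v = v₁ ∨ v = v₂ ∨ v = v₃ := by
  obtain ⟨v₁, v₂, h⟩ := stmt5_general b
  exact ⟨v₁, v₂, v₂, fun v hv => (h v hv).imp_right Or.inl⟩
end

section
/- Fix 0 < s < 1/2 and define reals a_1 = 1 and, for k ≥ 2, a_k = 2·(k·∏_{i=1}^{k−1} 100·a_i)^{1/s}. Let F be the set of irrational x ∈ (0,1) whose continued fraction digits satisfy a_k ≤ a_k(x) ≤ 50·a_k for every k ≥ 1. Then the Hausdorff dimension of F is at most s. -/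
open MeasureTheory Filter

/-!
The Gauss map does not shrink the distance between two points with the same first digit, since
`|x - y| ≤ |1/x - 1/y|` on `(0, 1]`. After `n` steps both points lie in `(0, 1 / a]` if their next
digit is at least `a`, so the `n`-th cylinders of a set of restricted digits have diameter at most
`1 / a`, where `a` bounds the *following* digit from below. There are at most `∏_{i ≤ n} 50 A i`
such cylinders, and the recursion makes this product at most `A (n + 1) ^ s`; hence the `s`-sums of
the covers by cylinders are at most `1`.
-/

section ContinuedFractions

open Set Topology

/-- The irrational numbers of the unit interval, on which every iterate of the Gauss map and every
continued fraction digit is meaningful. -/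
def unitIrrationals : Set ℝ := {x | x ∈ Ioo (0 : ℝ) 1 ∧ Irrational x}

/-- The points whose continued fraction digits are restricted to prescribed finite sets:
`a_{n+1}(x) ∈ D n` for all `n`, digits being numbered from `0` as in `cfDigit`. -/
def digitSet (D : ℕ → Finset ℕ) : Set ℝ := {x ∈ unitIrrationals | ∀ n, cfDigit x n ∈ D n}

lemma mapsTo_gaussMap_unitIrrationals : MapsTo gaussMap unitIrrationals unitIrrationals := by
  rintro x ⟨-, hx⟩
  have irrational_gaussMap : Irrational (gaussMap x) := by
    rw [gaussMap, one_div]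
    exact hx.inv.sub_intCast _
  exact ⟨⟨(Int.fract_nonneg (1 / x)).lt_of_ne' irrational_gaussMap.ne_zero,
    Int.fract_lt_one (1 / x)⟩, irrational_gaussMap⟩

lemma iterate_gaussMap_mem_unitIrrationals {x : ℝ} (hx : x ∈ unitIrrationals) (n : ℕ) :
    gaussMap^[n] x ∈ unitIrrationals :=
  mapsTo_gaussMap_unitIrrationals.iterate n hx

lemma gaussMap_eq_inv_sub_cfDigit {x : ℝ} (hx : 0 < x) : gaussMap x = x⁻¹ - cfDigit x 0 := by
  have digit_eq_floor : (cfDigit x 0 : ℤ) = ⌊1 / x⌋ :=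
    Int.toNat_of_nonneg (Int.floor_nonneg.2 (one_div_pos.2 hx).le)
  rw [gaussMap, ← digit_eq_floor, one_div, Int.cast_natCast]

lemma abs_sub_le_abs_inv_sub_inv {x y : ℝ} (hx : x ∈ Ioc (0 : ℝ) 1) (hy : y ∈ Ioc (0 : ℝ) 1) :
    |x - y| ≤ |x⁻¹ - y⁻¹| := by
  have hxy : 0 < x * y := mul_pos hx.1 hy.1
  rw [inv_sub_inv hx.1.ne' hy.1.ne', abs_div, abs_of_pos hxy, abs_sub_comm]
  exact le_div_self (abs_nonneg _) hxy (mul_le_one₀ hx.2 hy.1.le hy.2)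

lemma abs_sub_le_abs_gaussMap_sub {x y : ℝ} (hx : x ∈ Ioc (0 : ℝ) 1) (hy : y ∈ Ioc (0 : ℝ) 1)
    (h : cfDigit x 0 = cfDigit y 0) : |x - y| ≤ |gaussMap x - gaussMap y| := by
  rw [gaussMap_eq_inv_sub_cfDigit hx.1, gaussMap_eq_inv_sub_cfDigit hy.1, h,
    sub_sub_sub_cancel_right]
  exact abs_sub_le_abs_inv_sub_inv hx hy

lemma abs_sub_le_abs_iterate_gaussMap_sub {x y : ℝ} (hx : x ∈ unitIrrationals)
    (hy : y ∈ unitIrrationals) {n : ℕ} (h : ∀ i < n, cfDigit x i = cfDigit y i) :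
    |x - y| ≤ |gaussMap^[n] x - gaussMap^[n] y| := by
  induction n generalizing x y with
  | zero => rfl
  | succ n ih =>
    calc |x - y| ≤ |gaussMap x - gaussMap y| :=
          abs_sub_le_abs_gaussMap_sub (Ioo_subset_Ioc_self hx.1) (Ioo_subset_Ioc_self hy.1)
            (h 0 n.succ_pos)
      _ ≤ |gaussMap^[n + 1] x - gaussMap^[n + 1] y| :=
          ih (mapsTo_gaussMap_unitIrrationals hx) (mapsTo_gaussMap_unitIrrationals hy)
            fun i hi => h (i + 1) (Nat.succ_lt_succ hi)

lemma cfDigit_le_inv_iterate_gaussMap {x : ℝ} (hx : x ∈ unitIrrationals) (n : ℕ) :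
    (cfDigit x n : ℝ) ≤ (gaussMap^[n] x)⁻¹ := by
  rw [cfDigit, Int.floor_toNat, one_div]
  exact Nat.floor_le (inv_nonneg.2 (iterate_gaussMap_mem_unitIrrationals hx n).1.1.le)

lemma iterate_gaussMap_mem_Icc_of_le_cfDigit {x r : ℝ} {n : ℕ} (hx : x ∈ unitIrrationals)
    (hr : 0 < r) (h : r ≤ cfDigit x n) : gaussMap^[n] x ∈ Icc 0 r⁻¹ := by
  have iterate_pos : 0 < gaussMap^[n] x := (iterate_gaussMap_mem_unitIrrationals hx n).1.1
  exact ⟨iterate_pos.le,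
    (le_inv_comm₀ hr iterate_pos).1 (h.trans (cfDigit_le_inv_iterate_gaussMap hx n))⟩

lemma abs_sub_le_inv_of_cfDigit_eq {x y r : ℝ} {n : ℕ} (hx : x ∈ unitIrrationals)
    (hy : y ∈ unitIrrationals) (h : ∀ i < n, cfDigit x i = cfDigit y i) (hr : 0 < r)
    (hxr : r ≤ cfDigit x n) (hyr : r ≤ cfDigit y n) : |x - y| ≤ r⁻¹ :=
  calc |x - y| ≤ |gaussMap^[n] x - gaussMap^[n] y| := abs_sub_le_abs_iterate_gaussMap_sub hx hy h
    _ ≤ r⁻¹ - 0 := abs_sub_le_of_le_of_le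
        (iterate_gaussMap_mem_Icc_of_le_cfDigit hx hr hxr).1
        (iterate_gaussMap_mem_Icc_of_le_cfDigit hx hr hxr).2
        (iterate_gaussMap_mem_Icc_of_le_cfDigit hy hr hyr).1
        (iterate_gaussMap_mem_Icc_of_le_cfDigit hy hr hyr).2
    _ = r⁻¹ := sub_zero _

/-- The part of `digitSet D` where the first `n` digits are those of the admissible word `v`. -/
def digitCylinder (D : ℕ → Finset ℕ) {n : ℕ} (v : (i : Fin n) → D i) : Set ℝ :=
  {x ∈ digitSet D | ∀ i : Fin n, cfDigit x i = (v i : ℕ)}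

lemma digitSet_subset_iUnion_digitCylinder (D : ℕ → Finset ℕ) (n : ℕ) :
    digitSet D ⊆ ⋃ v : (i : Fin n) → D i, digitCylinder D v :=
  fun x hx => mem_iUnion.2 ⟨fun i => ⟨cfDigit x i, hx.2 i⟩, hx, fun _ => rfl⟩

section Dimension

variable {D : ℕ → Finset ℕ} {r : ℕ → ℝ} {s C : ℝ}

lemma ediam_digitCylinder_le {n : ℕ} {ρ : ℝ} (hρ : 0 < ρ) (hD : ∀ m ∈ D n, ρ ≤ m)
    (v : (i : Fin n) → D i) : Metric.ediam (digitCylinder D v) ≤ ENNReal.ofReal ρ⁻¹ := by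
  refine Metric.ediam_le fun x hx y hy => ?_
  rw [edist_dist, Real.dist_eq]
  exact ENNReal.ofReal_le_ofReal <| abs_sub_le_inv_of_cfDigit_eq hx.1.1 hy.1.1
    (fun i hi => (hx.2 ⟨i, hi⟩).trans (hy.2 ⟨i, hi⟩).symm) hρ (hD _ (hx.1.2 n)) (hD _ (hy.1.2 n))

lemma sum_ediam_digitCylinder_rpow_le {n : ℕ} {ρ : ℝ} (hs : 0 ≤ s) (hρ : 0 < ρ)
    (hD : ∀ m ∈ D n, ρ ≤ m) (hC : ∏ i ∈ Finset.range n, ((D i).card : ℝ) ≤ C * ρ ^ s) :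
    ∑ v : (i : Fin n) → D i, Metric.ediam (digitCylinder D v) ^ s ≤ ENNReal.ofReal C := by
  calc ∑ v : (i : Fin n) → D i, Metric.ediam (digitCylinder D v) ^ s
      ≤ ∑ _v : (i : Fin n) → D i, ENNReal.ofReal (ρ⁻¹ ^ s) := by
        gcongr with v
        rw [← ENNReal.ofReal_rpow_of_nonneg (inv_pos.2 hρ).le hs]
        exact ENNReal.rpow_le_rpow (ediam_digitCylinder_le hρ hD v) hs
    _ = ENNReal.ofReal ((∏ i ∈ Finset.range n, ((D i).card : ℝ)) / ρ ^ s) := by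
        rw [← Fin.prod_univ_eq_prod_range (fun i => ((D i).card : ℝ)), div_eq_mul_inv,
          ← Real.inv_rpow hρ.le, ← Nat.cast_prod, ENNReal.ofReal_mul (Nat.cast_nonneg _),
          ENNReal.ofReal_natCast]
        simp
    _ ≤ ENNReal.ofReal C :=
        ENNReal.ofReal_le_ofReal ((div_le_iff₀ (Real.rpow_pos_of_pos hρ s)).2 hC)

theorem hausdorffMeasure_digitSet_le (hs : 0 ≤ s) (hD : ∀ n, ∀ m ∈ D n, r n ≤ m)
    (hr : Tendsto r atTop atTop)
    (hC : ∃ᶠ n in atTop, ∏ i ∈ Finset.range n, ((D i).card : ℝ) ≤ C * r n ^ s) :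
    μH[s] (digitSet D) ≤ ENNReal.ofReal C := by
  have r_pos : ∀ᶠ n in atTop, 0 < r n := hr.eventually_gt_atTop 0
  have mesh_tendsto : Tendsto (fun n => ENNReal.ofReal (r n)⁻¹) atTop (𝓝 0) := by
    simpa using ENNReal.tendsto_ofReal hr.inv_tendsto_atTop
  calc μH[s] (digitSet D)
      ≤ liminf (fun n => ∑ v : (i : Fin n) → D i, Metric.ediam (digitCylinder D v) ^ s) atTop :=
        Measure.hausdorffMeasure_le_liminf_sum s _ _ mesh_tendsto _
          (r_pos.mono fun n hn => ediam_digitCylinder_le hn (hD n))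
          (.of_forall (digitSet_subset_iUnion_digitCylinder D))
    _ ≤ ENNReal.ofReal C :=
        liminf_le_of_frequently_le' <| (hC.and_eventually r_pos).mono fun n hn =>
          sum_ediam_digitCylinder_rpow_le hs hn.2 (hD n) hn.1

theorem dimH_digitSet_le (hs : 0 ≤ s) (hD : ∀ n, ∀ m ∈ D n, r n ≤ m)
    (hr : Tendsto r atTop atTop)
    (hC : ∃ᶠ n in atTop, ∏ i ∈ Finset.range n, ((D i).card : ℝ) ≤ C * r n ^ s) :
    dimH (digitSet D) ≤ ENNReal.ofReal s := by
  have measure_le := hausdorffMeasure_digitSet_le hs hD hr hC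
  lift s to NNReal using hs
  rw [ENNReal.ofReal_coe_nnreal]
  exact dimH_le_of_hausdorffMeasure_ne_top (measure_le.trans_lt ENNReal.ofReal_lt_top).ne

end Dimension

lemma card_Icc_ceil_floor_le {a b : ℝ} (ha : 0 < a) (hb : 0 ≤ b) :
    ((Finset.Icc ⌈a⌉₊ ⌊b⌋₊).card : ℝ) ≤ b := by
  have ceil_pos : 0 < ⌈a⌉₊ := Nat.ceil_pos.2 ha
  have card_le : (Finset.Icc ⌈a⌉₊ ⌊b⌋₊).card ≤ ⌊b⌋₊ := by
    rw [Nat.card_Icc]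
    lia
  exact (Nat.cast_le.2 card_le).trans (Nat.floor_le hb)

theorem dimH_cfDigit_mem_Icc_le {s C : ℝ} {a b : ℕ → ℝ} (hs : 0 ≤ s) (ha : ∀ n, 0 < a n)
    (hb : ∀ n, 0 ≤ b n) (ha_tendsto : Tendsto a atTop atTop)
    (hC : ∃ᶠ n in atTop, ∏ i ∈ Finset.range n, b i ≤ C * a n ^ s) :
    dimH {x ∈ unitIrrationals | ∀ n, (cfDigit x n : ℝ) ∈ Icc (a n) (b n)} ≤
      ENNReal.ofReal s := by
  let D : ℕ → Finset ℕ := fun n => Finset.Icc ⌈a n⌉₊ ⌊b n⌋₊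
  have subset_digitSet :
      {x ∈ unitIrrationals | ∀ n, (cfDigit x n : ℝ) ∈ Icc (a n) (b n)} ⊆ digitSet D :=
    fun x hx => ⟨hx.1, fun n =>
      Finset.mem_Icc.2 ⟨Nat.ceil_le.2 (hx.2 n).1, Nat.le_floor (hx.2 n).2⟩⟩
  have card_prod_le (n : ℕ) :
      ∏ i ∈ Finset.range n, ((D i).card : ℝ) ≤ ∏ i ∈ Finset.range n, b i :=
    Finset.prod_le_prod (fun _ _ => Nat.cast_nonneg _)
      fun i _ => card_Icc_ceil_floor_le (ha i) (hb i)
  exact (dimH_mono subset_digitSet).trans <| dimH_digitSet_le hs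
    (fun n m hm => Nat.ceil_le.1 (Finset.mem_Icc.1 hm).1) ha_tendsto
    (hC.mono fun n hn => (card_prod_le n).trans hn)

end ContinuedFractions

/-- Sequences `A 1, A 2, …` growing at least as fast as the recursion
`A k = 2 (k ∏_{i < k} 100 A i)^(1/s)` prescribes. The index starts at `1`, and `A 0` is unconstrained. -/
structure DominatesDigitRecursion (s : ℝ) (A : ℕ → ℝ) : Prop where
  one_le_init : 1 ≤ A 1
  recursion_le : ∀ k : ℕ, 2 ≤ k →
    2 * ((k : ℝ) * ∏ i ∈ Finset.Icc 1 (k - 1), 100 * A i) ^ (1 / s) ≤ A k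

namespace DominatesDigitRecursion

variable {s : ℝ} {A : ℕ → ℝ}

lemma one_le (hA : DominatesDigitRecursion s A) (hs : 0 < s) {k : ℕ} (hk : 1 ≤ k) : 1 ≤ A k := by
  induction k using Nat.strong_induction_on with
  | _ k ih =>
    obtain rfl | hk2 := hk.eq_or_lt
    · exact hA.one_le_init
    · have one_le_prod : 1 ≤ ∏ i ∈ Finset.Icc 1 (k - 1), 100 * A i := by
        refine Finset.one_le_prod fun i hi => ?_
        rw [Finset.mem_Icc] at hi
        linarith [ih i (by lia) hi.1]
      have one_le_mul : 1 ≤ (k : ℝ) * ∏ i ∈ Finset.Icc 1 (k - 1), 100 * A i :=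
        one_le_mul_of_one_le_of_one_le (Nat.one_le_cast.2 hk) one_le_prod
      linarith [hA.recursion_le k hk2, Real.one_le_rpow one_le_mul (one_div_pos.2 hs).le]

lemma one_le_prod (hA : DominatesDigitRecursion s A) (hs : 0 < s) (n : ℕ) :
    1 ≤ ∏ i ∈ Finset.range n, 100 * A (i + 1) :=
  Finset.one_le_prod fun i _ => by linarith [hA.one_le hs i.succ_pos]

lemma mul_prod_le_rpow (hA : DominatesDigitRecursion s A) (hs : 0 < s) (n : ℕ) :
    ((n + 1 : ℕ) : ℝ) * ∏ i ∈ Finset.range n, 100 * A (i + 1) ≤ A (n + 1) ^ s := by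
  have prod_nonneg := zero_le_one.trans (hA.one_le_prod hs n)
  have A_nonneg : 0 ≤ A (n + 1) := zero_le_one.trans (hA.one_le hs n.succ_pos)
  obtain rfl | hn := n.eq_zero_or_pos
  · simpa using Real.one_le_rpow hA.one_le_init hs.le
  · have recursion_le := hA.recursion_le (n + 1) (by lia)
    rw [Nat.add_sub_cancel, ← Finset.Ico_add_one_right_eq_Icc, Finset.prod_Ico_eq_prod_range,
      Nat.add_sub_cancel, one_div] at recursion_le
    simp only [add_comm 1] at recursion_le
    rw [← Real.rpow_inv_le_iff_of_pos (by positivity) A_nonneg hs]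
    exact (le_mul_of_one_le_left (by positivity) one_le_two).trans recursion_le

lemma prod_le_rpow (hA : DominatesDigitRecursion s A) (hs : 0 < s) (n : ℕ) :
    ∏ i ∈ Finset.range n, 50 * A (i + 1) ≤ A (n + 1) ^ s := by
  have A_nonneg (i : ℕ) : 0 ≤ A (i + 1) := zero_le_one.trans (hA.one_le hs i.succ_pos)
  calc ∏ i ∈ Finset.range n, 50 * A (i + 1)
      ≤ ∏ i ∈ Finset.range n, 100 * A (i + 1) :=
        Finset.prod_le_prod (fun i _ => mul_nonneg (by norm_num) (A_nonneg i))
          fun i _ => mul_le_mul_of_nonneg_right (by norm_num) (A_nonneg i)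
    _ ≤ ((n + 1 : ℕ) : ℝ) * ∏ i ∈ Finset.range n, 100 * A (i + 1) :=
        le_mul_of_one_le_left (zero_le_one.trans (hA.one_le_prod hs n))
          (Nat.one_le_cast.2 n.succ_pos)
    _ ≤ A (n + 1) ^ s := hA.mul_prod_le_rpow hs n

lemma tendsto_atTop (hA : DominatesDigitRecursion s A) (hs : 0 < s) :
    Tendsto (fun n => A (n + 1)) atTop atTop := by
  have rpow_inv_le (n : ℕ) : ((n + 1 : ℕ) : ℝ) ^ s⁻¹ ≤ A (n + 1) := by
    rw [Real.rpow_inv_le_iff_of_pos (Nat.cast_nonneg _)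
      (zero_le_one.trans (hA.one_le hs n.succ_pos)) hs]
    exact (le_mul_of_one_le_right (Nat.cast_nonneg _) (hA.one_le_prod hs n)).trans
      (hA.mul_prod_le_rpow hs n)
  refine tendsto_atTop_mono rpow_inv_le ?_
  exact (tendsto_rpow_atTop (inv_pos.2 hs)).comp
    (tendsto_natCast_atTop_atTop.comp (tendsto_add_atTop_nat 1))

end DominatesDigitRecursion

theorem stmt15_general (s : ℝ) (h0 : 0 < s) (A : ℕ → ℝ) (hA1 : 1 ≤ A 1)
    (hAk : ∀ k : ℕ, 2 ≤ k →
      2 * ((k : ℝ) * ∏ i ∈ Finset.Icc 1 (k - 1), 100 * A i) ^ (1 / s) ≤ A k) :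
    dimH {x : ℝ | x ∈ Set.Ioo (0 : ℝ) 1 ∧ Irrational x ∧
        ∀ k : ℕ, 1 ≤ k →
          A k ≤ (cfDigit x (k - 1) : ℝ) ∧ (cfDigit x (k - 1) : ℝ) ≤ 50 * A k} ≤
      ENNReal.ofReal s := by
  have hA : DominatesDigitRecursion s A := ⟨hA1, hAk⟩
  have A_pos (n : ℕ) : 0 < A (n + 1) := zero_lt_one.trans_le (hA.one_le h0 n.succ_pos)
  have dimH_shifted_le :
      dimH {x ∈ unitIrrationals |
        ∀ n, (cfDigit x n : ℝ) ∈ Set.Icc (A (n + 1)) (50 * A (n + 1))} ≤ ENNReal.ofReal s :=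
    dimH_cfDigit_mem_Icc_le (C := 1) h0.le A_pos (fun n => by linarith [A_pos n])
      (hA.tendsto_atTop h0) (.of_forall fun n => by simpa using hA.prod_le_rpow h0 n)
  refine (dimH_mono ?_).trans dimH_shifted_le
  exact fun x ⟨hx, hx_irr, digit_bounds⟩ =>
    ⟨⟨hx, hx_irr⟩, fun n => digit_bounds (n + 1) n.succ_pos⟩

theorem stmt15 (s : ℝ) (h0 : 0 < s) (h1 : s < 1 / 2) (A : ℕ → ℝ)
    (hA1 : A 1 = 1)
    (hAk : ∀ k : ℕ, 2 ≤ k →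
      A k = 2 * ((k : ℝ) * ∏ i ∈ Finset.Icc 1 (k - 1), 100 * A i) ^ (1 / s)) :
    dimH {x : ℝ | x ∈ Set.Ioo (0 : ℝ) 1 ∧ Irrational x ∧
        ∀ k : ℕ, 1 ≤ k →
          A k ≤ (cfDigit x (k - 1) : ℝ) ∧ (cfDigit x (k - 1) : ℝ) ≤ 50 * A k} ≤
      ENNReal.ofReal s :=
  stmt15_general s h0 A hA1.ge fun k hk => (hAk k hk).ge
end
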